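/- Let SA_Z(G) denote the matrix obtained from the symbolic adjacency matrix SA(G) by substituting an arbitrary field element Z_{i,j} ∈ 𝔽 for each variable z_{i,j}, so that SA_Z(G) is an n×n matrix over 𝔽[x]. Then for every choice of the values Z_{i,j} and all vertices u, v, deg*_x( adj(SA_Z(G))_{u,v} ) ≥ ‖uv‖; in particular, if ‖uv‖ = +∞ then adj(SA_Z(G))_{u,v} = 0, and if ‖uv‖ ≥ r then adj(SA_Z(G))_{u,v} ≡ 0 (mod x^r). -/

import Mathlib

/-- The length of a walk `p` (a list of vertices) in the weighted digraph with
weight function `W`, i.e. the sum of the weights of consecutive pairs. -/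
def walkLen {V : Type*} (W : V → V → ℕ∞) (p : List V) : ℕ∞ :=
  ((p.zip p.tail).map fun q => W q.1 q.2).sum

/-- `p` is a walk from `u` to `v`: it is nonempty, starts at `u`, ends at `v`,
and every consecutive pair is an edge (finite weight). -/
def IsWalk {V : Type*} (W : V → V → ℕ∞) (u v : V) (p : List V) : Prop :=
  p.head? = some u ∧ p.getLast? = some v ∧ p.Chain' fun x y => W x y ≠ ⊤

/-- The distance from `u` to `v`: the infimum of lengths of walks from `u` to `v`
(`⊤` if there is no walk). -/
noncomputable def gdist {V : Type*} (W : V → V → ℕ∞) (u v : V) : ℕ∞ :=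
  sInf {d | ∃ p, IsWalk W u v p ∧ walkLen W p = d}

/-- `p` is a shortest path from `u` to `v`: a walk from `u` to `v` whose length
equals the distance. -/
def IsShortestPath {V : Type*} (W : V → V → ℕ∞) (u v : V) (p : List V) : Prop :=
  IsWalk W u v p ∧ walkLen W p = gdist W u v

/-- The symbolic adjacency matrix of the digraph on `Fin n` with weight function `W`
(`W i j = ⊤` meaning no edge), with the variable `z_{i,j}` substituted by the field
element `Z (i, j)`; a matrix over `𝔽[x]`. -/
noncomputable def symbAdjZ {F : Type*} [Field F] {n : ℕ} (W : Fin n → Fin n → ℕ∞)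
    (Z : Fin n × Fin n → F) : Matrix (Fin n) (Fin n) (Polynomial F) :=
  fun i j =>
    if i = j then 1
    else if W i j ≠ ⊤ then
      Polynomial.C (Z (i, j)) * Polynomial.X ^ (W i j).toNat
    else 0

/-!
Write `d i` for the distance from `i` to `v` and let `D` be the diagonal matrix with entries
`x ^ d i`. The inequality `d i ≤ w(i, j) + d j` says that row `i` of `A * D`, where `A` is the
symbolic adjacency matrix, is divisible by `x ^ d i`, so that `A * D = D * B` for some polynomial
matrix `B`. Since `adj` is antimultiplicative and `det D` is a power of `x`, which can be cancelled,
also `adj A * D = D * adj B`. At `(u, v)`, where `d v = 0`, this reads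
`adj(A)_{u,v} = x ^ d u * adj(B)_{u,v}`. Infinite distances are dealt with by truncating `d`.
-/

section Walks

variable {V : Type*} {W : V → V → ℕ∞} {u v w : V} {p : List V}

theorem gdist_le_walkLen (hp : IsWalk W u v p) : gdist W u v ≤ walkLen W p :=
  sInf_le ⟨p, hp, rfl⟩

theorem isWalk_singleton (W : V → V → ℕ∞) (u : V) : IsWalk W u u [u] :=
  ⟨rfl, rfl, List.isChain_singleton u⟩

theorem gdist_self (W : V → V → ℕ∞) (u : V) : gdist W u u = 0 :=
  nonpos_iff_eq_zero.mp (gdist_le_walkLen (isWalk_singleton W u))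

theorem IsWalk.exists_eq_cons (hp : IsWalk W u v p) : ∃ t, p = u :: t :=
  List.head?_eq_some_iff.mp hp.1

theorem IsWalk.cons (hp : IsWalk W w v p) (huw : W u w ≠ ⊤) : IsWalk W u v (u :: p) := by
  obtain ⟨t, rfl⟩ := hp.exists_eq_cons
  obtain ⟨-, hlast, hchain⟩ := hp
  exact ⟨rfl, List.getLast?_cons_cons.trans hlast, List.isChain_cons_cons.mpr ⟨huw, hchain⟩⟩

theorem IsWalk.walkLen_cons (hp : IsWalk W w v p) : walkLen W (u :: p) = W u w + walkLen W p := by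
  obtain ⟨t, rfl⟩ := hp.exists_eq_cons
  simp [walkLen]

theorem gdist_le_weight_add_gdist (W : V → V → ℕ∞) (u w v : V) :
    gdist W u v ≤ W u w + gdist W w v := by
  by_cases huw : W u w = ⊤
  · simp [huw]
  change gdist W u v ≤ W u w + sInf _
  rw [ENat.add_sInf]
  refine le_iInf₂ ?_
  rintro _ ⟨p, hp, rfl⟩
  exact (gdist_le_walkLen (hp.cons huw)).trans_eq hp.walkLen_cons

end Walks

section TrailingDegree

open Polynomial

theorem natCast_le_trailingDegree_iff_X_pow_dvd {R : Type*} [Semiring R] {p : R[X]} {r : ℕ} :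
    (r : ℕ∞) ≤ p.trailingDegree ↔ X ^ r ∣ p := by
  rw [X_pow_dvd_iff]
  constructor
  · intro hr k hk
    exact coeff_eq_zero_of_lt_trailingDegree ((Nat.cast_lt.mpr hk).trans_le hr)
  · intro hcoeff
    refine Finset.le_min fun k hk ↦ Nat.cast_le.mpr ?_
    by_contra! hkr
    exact mem_support_iff.mp hk (hcoeff k hkr)

theorem trailingDegree_mul_X_pow {R : Type*} [Semiring R] (p : R[X]) (k : ℕ) :
    (p * X ^ k).trailingDegree = p.trailingDegree + k := by
  rcases eq_or_ne p 0 with rfl | hp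
  · simp
  have : Nontrivial R := nontrivial_iff.mp (nontrivial_of_ne p 0 hp)
  have hX : (X ^ k : R[X]).trailingCoeff = 1 := by simp [trailingCoeff]
  rw [trailingDegree_mul' (by simpa [hX] using hp), trailingDegree_X_pow]

theorem weight_le_trailingDegree_symbAdjZ {F : Type*} [Field F] {n : ℕ}
    (W : Fin n → Fin n → ℕ∞) (Z : Fin n × Fin n → F) {i j : Fin n} (hij : i ≠ j) :
    W i j ≤ (symbAdjZ W Z i j).trailingDegree := by
  by_cases hW : W i j = ⊤
  · simp [symbAdjZ, hij, hW]
  · rw [symbAdjZ, if_neg hij, if_pos hW]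
    exact (ENat.natCast_toNat hW).symm.le.trans (le_trailingDegree_C_mul_X_pow _ _)

end TrailingDegree

section Adjugate

open Matrix Polynomial

variable {V R : Type*} [Fintype V] [DecidableEq V] [CommRing R]

theorem adjugate_mul_eq_mul_adjugate_of_mul_eq_mul {A B D : Matrix V V R}
    (hD : IsRegular D.det) (h : A * D = D * B) : A.adjugate * D = D * B.adjugate := by
  have hadj : D.adjugate * A.adjugate = B.adjugate * D.adjugate := by
    rw [← adjugate_mul_distrib, h, adjugate_mul_distrib]
  have hreg : IsLeftRegular D.adjugate.det := det_adjugate D ▸ (hD.pow _).left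
  refine (isRegular_of_isLeftRegular_det hreg).left ?_
  calc
    D.adjugate * (A.adjugate * D) = B.adjugate * (D.adjugate * D) := by
      rw [← mul_assoc, hadj, mul_assoc]
    _ = D.adjugate * D * B.adjugate := by
      rw [adjugate_mul, mul_smul_one, smul_one_mul]
    _ = D.adjugate * (D * B.adjugate) := mul_assoc _ _ _

theorem dvd_adjugate_mul_of_dvd_mul {A : Matrix V V R} {s : V → R}
    (hs : ∀ i, IsRegular (s i)) (h : ∀ i j, s i ∣ A i j * s j) (u v : V) :
    s u ∣ A.adjugate u v * s v := by
  choose B hB using h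
  have hdet : IsRegular (diagonal s).det := by
    rw [det_diagonal]
    exact IsRegular.prod fun i _ ↦ hs i
  have hAB : A * diagonal s = diagonal s * of B := by
    ext i j
    rw [mul_diagonal, diagonal_mul, hB, of_apply]
  have hadj := adjugate_mul_eq_mul_adjugate_of_mul_eq_mul hdet hAB
  refine ⟨(of B).adjugate u v, ?_⟩
  rw [← mul_diagonal, hadj, diagonal_mul]

theorem natCast_le_trailingDegree_adjugate_add {A : Matrix V V R[X]} {d : V → ℕ}
    (h : ∀ i j, (d i : ℕ∞) ≤ (A i j).trailingDegree + d j) (u v : V) :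
    (d u : ℕ∞) ≤ (A.adjugate u v).trailingDegree + d v := by
  simp only [← trailingDegree_mul_X_pow, natCast_le_trailingDegree_iff_X_pow_dvd] at h ⊢
  exact dvd_adjugate_mul_of_dvd_mul (fun i ↦ isRegular_X_pow (d i)) h u v

theorem le_trailingDegree_adjugate_add {A : Matrix V V R[X]} {d : V → ℕ∞}
    (h : ∀ i j, d i ≤ (A i j).trailingDegree + d j) (u v : V) :
    d u ≤ (A.adjugate u v).trailingDegree + d v := by
  refine ENat.forall_natCast_le_iff_le.mp fun r hr ↦ ?_
  have hcoe (i : V) : ((min (r : ℕ∞) (d i)).toNat : ℕ∞) = min (r : ℕ∞) (d i) :=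
    ENat.natCast_toNat (ne_top_of_le_ne_top (ENat.natCast_ne_top r) (min_le_left _ _))
  have htrunc := natCast_le_trailingDegree_adjugate_add (A := A)
    (d := fun i ↦ (min (r : ℕ∞) (d i)).toNat) (fun i j ↦ ?_) u v
  · rw [hcoe, hcoe, min_eq_left hr] at htrunc
    exact htrunc.trans (by gcongr; exact min_le_right _ _)
  · rw [hcoe, hcoe, ← min_add_add_left]
    exact min_le_min le_add_self (h i j)

theorem gdist_le_trailingDegree_adjugate {W : V → V → ℕ∞} {A : Matrix V V R[X]}
    (hA : ∀ i j, i ≠ j → W i j ≤ (A i j).trailingDegree) (u v : V) :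
    gdist W u v ≤ (A.adjugate u v).trailingDegree := by
  have hstep (i j : V) : gdist W i v ≤ (A i j).trailingDegree + gdist W j v := by
    rcases eq_or_ne i j with rfl | hij
    · exact le_add_self
    · exact (gdist_le_weight_add_gdist W i j v).trans (by gcongr; exact hA i j hij)
  simpa only [gdist_self, add_zero] using le_trailingDegree_adjugate_add hstep u v

theorem dist_le_trailingDegree_adjugate_symbAdjZ_general {W : V → V → ℕ∞} {A : Matrix V V R[X]}
    (hA : ∀ i j, i ≠ j → W i j ≤ (A i j).trailingDegree) (u v : V) :
    gdist W u v ≤ (A.adjugate u v).trailingDegree ∧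
      (gdist W u v = ⊤ → A.adjugate u v = 0) ∧
      ∀ r : ℕ, (r : ℕ∞) ≤ gdist W u v → X ^ r ∣ A.adjugate u v := by
  have hdist := gdist_le_trailingDegree_adjugate hA u v
  refine ⟨hdist, fun htop ↦ ?_, fun r hr ↦ ?_⟩
  · exact trailingDegree_eq_top.mp (top_le_iff.mp (htop ▸ hdist))
  · exact natCast_le_trailingDegree_iff_X_pow_dvd.mp (hr.trans hdist)

end Adjugate

theorem dist_le_trailingDegree_adjugate_symbAdjZ {F : Type*} [Field F] {n : ℕ}
    (W : Fin n → Fin n → ℕ∞) (hpos : ∀ i j, W i j ≠ 0) (hloop : ∀ i, W i i = ⊤)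
    (Z : Fin n × Fin n → F) (u v : Fin n) :
    gdist W u v ≤ ((symbAdjZ W Z).adjugate u v).trailingDegree ∧
      (gdist W u v = ⊤ → (symbAdjZ W Z).adjugate u v = 0) ∧
      ∀ r : ℕ, (r : ℕ∞) ≤ gdist W u v →
        Polynomial.X ^ r ∣ (symbAdjZ W Z).adjugate u v :=
  dist_le_trailingDegree_adjugate_symbAdjZ_general
    (fun _ _ hij ↦ weight_le_trailingDegree_symbAdjZ W Z hij) u v
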